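/- There exists exactly one real number V_* in the interval [10⁻⁶,10⁶] with f(V_*)=0; this V_* lies in the interval [0.110335, 0.110336]; moreover f(V)>0 for every real V with 0<V<V_*, and f(V)<0 for every real V with V>V_*. -/

import Mathlib

/-- z₀(G) = 32G³+27G²+3√3·√(27G⁴+64G⁵). -/
noncomputable def z₀ (G : ℝ) : ℝ :=
  32 * G ^ 3 + 27 * G ^ 2 + 3 * Real.sqrt 3 * Real.sqrt (27 * G ^ 4 + 64 * G ^ 5)

/-- z₁(G) = 2^{5/3}·G·z₀(G)^{−1/3}. -/
noncomputable def z₁ (G : ℝ) : ℝ :=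
  (2 : ℝ) ^ ((5 : ℝ) / 3) * G * (z₀ G) ^ (-(1 : ℝ) / 3)

/-- y₀(G) = (2G/3)·(1+z₁(G)+z₁(G)⁻¹), a root of the resolvent cubic. -/
noncomputable def y₀ (G : ℝ) : ℝ :=
  (2 * G / 3) * (1 + z₁ G + (z₁ G)⁻¹)

/-- The quartic P_G(k)=k⁴−2Gk²+2Gk+G² determining the critical frequencies. -/
noncomputable def P (G k : ℝ) : ℝ :=
  k ^ 4 - 2 * G * k ^ 2 + 2 * G * k + G ^ 2

/-- The discriminant D(G)=−2y₀(G)+4G+4G/√(2y₀(G)). -/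
noncomputable def Dd (G : ℝ) : ℝ :=
  -2 * y₀ G + 4 * G + 4 * G / Real.sqrt (2 * y₀ G)

/-- The critical frequency closer to the origin, ω̃₊(G)=(−√(2y₀(G))+√(D(G)))/2. -/
noncomputable def ωp (G : ℝ) : ℝ :=
  (-Real.sqrt (2 * y₀ G) + Real.sqrt (Dd G)) / 2

/-- The critical frequency farther from the origin, ω̃₋(G)=(−√(2y₀(G))−√(D(G)))/2. -/
noncomputable def ωm (G : ℝ) : ℝ :=
  (-Real.sqrt (2 * y₀ G) - Real.sqrt (Dd G)) / 2

/-- The focusing-condition function f(V)=−(3/2)·V·ω̃₊(1/V)³−1. -/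
noncomputable def fV (V : ℝ) : ℝ :=
  -(3 / 2) * V * (ωp (1 / V)) ^ 3 - 1

/-!
Ferrari's method splits the quartic `P G` into two quadratics once a root `2 * y₀ G` of the
resolvent cubic is known. With `s = √(2y₀)` and `u = G / s ^ 3` the cubic reads `4us = 1 - 4u²`,
the quadratics become `k² ± sk + s²(1/2 ∓ u)²`, and `0 < u < 1/2` places `ω̃₊` in `(-√G, 0)`.
On that branch the curve `P G ω = 0` is rational: `ω = (1 - r²)/2` and `G = (r - 1)(r + 1)³/4` with
`r > 1`. Substituting gives `f(1/G) = (3/4)(r - 1)² - 1`, and `r` increases with `G`. Hence `f` is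
strictly decreasing and vanishes exactly at `r = 1 + 2/√3`, that is, at `V = 9(3√3 - 5)/16`.
-/

section ResolventCubic

theorem z₀_pos {G : ℝ} (hG : 0 < G) : 0 < z₀ G := by
  unfold z₀; positivity

theorem z₁_pos {G : ℝ} (hG : 0 < G) : 0 < z₁ G := by
  have := z₀_pos hG
  unfold z₁; positivity

theorem y₀_pos {G : ℝ} (hG : 0 < G) : 0 < y₀ G := by
  have := z₁_pos hG
  unfold y₀; positivity

theorem z₀_sq_add_sq {G : ℝ} (hG : 0 < G) :
    z₀ G ^ 2 + (32 * G ^ 3) ^ 2 = (64 * G ^ 3 + 54 * G ^ 2) * z₀ G := by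
  have sqrt_three_sq : √3 ^ 2 = (3 : ℝ) := Real.sq_sqrt (by norm_num)
  have sqrt_disc_sq : √(27 * G ^ 4 + 64 * G ^ 5) ^ 2 = 27 * G ^ 4 + 64 * G ^ 5 :=
    Real.sq_sqrt (by positivity)
  unfold z₀
  linear_combination 9 * √(27 * G ^ 4 + 64 * G ^ 5) ^ 2 * sqrt_three_sq + 27 * sqrt_disc_sq

theorem z₁_pow_three {G : ℝ} (hG : 0 < G) : z₁ G ^ 3 = 32 * G ^ 3 / z₀ G := by
  have two_rpow : ((2 : ℝ) ^ ((5 : ℝ) / 3)) ^ 3 = 32 := by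
    rw [← Real.rpow_mul_natCast (by norm_num)]
    norm_num
  have z₀_rpow : (z₀ G ^ (-(1 : ℝ) / 3)) ^ 3 = (z₀ G)⁻¹ := by
    rw [← Real.rpow_mul_natCast (z₀_pos hG).le, ← Real.rpow_neg_one]
    norm_num
  rw [z₁, mul_pow, mul_pow, two_rpow, z₀_rpow, div_eq_mul_inv]

theorem z₁_pow_three_add_inv {G : ℝ} (hG : 0 < G) :
    z₁ G ^ 3 + (z₁ G ^ 3)⁻¹ = 2 + 27 / (16 * G) := by
  have := z₀_pos hG
  rw [z₁_pow_three hG]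
  field_simp
  linear_combination 16 * z₀_sq_add_sq hG

theorem resolvent_cubic {G : ℝ} (hG : 0 < G) :
    (2 * y₀ G) ^ 3 = 4 * G * (2 * y₀ G) ^ 2 + 4 * G ^ 2 := by
  have hz := (z₁_pos hG).ne'
  set t := z₁ G + (z₁ G)⁻¹ with ht
  have cardano : t ^ 3 - 3 * t = 2 + 27 / (16 * G) := by
    rw [← z₁_pow_three_add_inv hG, ht]
    field_simp
    ring
  have y₀_eq : 2 * y₀ G = 4 * G / 3 * (1 + t) := by rw [y₀, ht]; ring
  have cancel : G * (27 / (16 * G)) = 27 / 16 := by field_simp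
  rw [y₀_eq]
  linear_combination 64 * G ^ 3 / 27 * cardano + 64 * G ^ 2 / 27 * cancel

end ResolventCubic

section Ferrari

/-- The square root `s = √(2y₀)` of the root of the resolvent cubic: the two quadratic factors of
`P G` have linear coefficients `s` and `-s`. -/
noncomputable def ferrariS (G : ℝ) : ℝ :=
  √(2 * y₀ G)

/-- The ratio `u = G / s ^ 3`, chosen so that the constant terms of the two quadratic factors of
`P G` are the perfect squares `s²(1/2 - u)²` and `s²(1/2 + u)²`. -/
noncomputable def ferrariU (G : ℝ) : ℝ :=
  G / ferrariS G ^ 3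

theorem ferrariS_pos {G : ℝ} (hG : 0 < G) : 0 < ferrariS G :=
  Real.sqrt_pos.2 (mul_pos two_pos (y₀_pos hG))

theorem ferrariS_sq {G : ℝ} (hG : 0 < G) : ferrariS G ^ 2 = 2 * y₀ G :=
  Real.sq_sqrt (mul_pos two_pos (y₀_pos hG)).le

theorem ferrariU_pos {G : ℝ} (hG : 0 < G) : 0 < ferrariU G :=
  div_pos hG (pow_pos (ferrariS_pos hG) 3)

theorem ferrariU_mul_ferrariS_pow_three {G : ℝ} (hG : 0 < G) :
    ferrariU G * ferrariS G ^ 3 = G :=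
  div_mul_cancel₀ G (pow_pos (ferrariS_pos hG) 3).ne'

theorem four_mul_ferrariU_mul_ferrariS {G : ℝ} (hG : 0 < G) :
    4 * ferrariU G * ferrariS G = 1 - 4 * ferrariU G ^ 2 := by
  have hs := ferrariS_pos hG
  have cubic := resolvent_cubic hG
  rw [← ferrariS_sq hG] at cubic
  unfold ferrariU
  field_simp
  linear_combination -cubic

theorem ferrariU_lt_half {G : ℝ} (hG : 0 < G) : ferrariU G < 1 / 2 := by
  have hu := ferrariU_pos hG
  have hus := mul_pos hu (ferrariS_pos hG)
  have := four_mul_ferrariU_mul_ferrariS hG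
  nlinarith

theorem eq_ferrariS_sq_mul {G : ℝ} (hG : 0 < G) :
    G = ferrariS G ^ 2 * (1 / 4 - ferrariU G ^ 2) := by
  linear_combination ferrariS G ^ 2 / 4 * four_mul_ferrariU_mul_ferrariS hG
    - ferrariU_mul_ferrariS_pow_three hG

theorem P_eq_mul {G : ℝ} (hG : 0 < G) (k : ℝ) :
    P G k = (k ^ 2 + ferrariS G * k + (ferrariS G * (1 / 2 - ferrariU G)) ^ 2) *
      (k ^ 2 - ferrariS G * k + (ferrariS G * (1 / 2 + ferrariU G)) ^ 2) := by
  unfold P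
  linear_combination
    (G + ferrariS G ^ 2 * (1 / 4 - ferrariU G ^ 2) - 2 * k ^ 2) * eq_ferrariS_sq_mul hG
      - 2 * k * ferrariU_mul_ferrariS_pow_three hG

theorem Dd_eq {G : ℝ} (hG : 0 < G) :
    Dd G = (2 * ferrariS G) ^ 2 * (ferrariU G * (1 - ferrariU G)) := by
  have hs := ferrariS_pos hG
  have div_eq : G / ferrariS G = ferrariS G ^ 2 * ferrariU G := by
    unfold ferrariU
    field_simp
  have Dd_def : Dd G = -ferrariS G ^ 2 + 4 * G + 4 * (G / ferrariS G) := by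
    rw [ferrariS_sq hG, Dd, ferrariS]
    ring
  rw [Dd_def, div_eq]
  linear_combination 4 * eq_ferrariS_sq_mul hG

theorem ωp_eq {G : ℝ} (hG : 0 < G) :
    ωp G = -(ferrariS G * (1 / 2 - √(ferrariU G * (1 - ferrariU G)))) := by
  have hs := ferrariS_pos hG
  rw [ωp, Dd_eq hG, Real.sqrt_mul (sq_nonneg _), Real.sqrt_sq (by positivity), ferrariS]
  ring

theorem ωp_neg {G : ℝ} (hG : 0 < G) : ωp G < 0 := by
  have hu := ferrariU_lt_half hG
  have sqrt_lt : √(ferrariU G * (1 - ferrariU G)) < 1 / 2 := by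
    rw [Real.sqrt_lt' (by norm_num)]
    nlinarith
  rw [ωp_eq hG, neg_lt_zero]
  exact mul_pos (ferrariS_pos hG) (sub_pos.2 sqrt_lt)

theorem ωp_quadratic {G : ℝ} (hG : 0 < G) :
    ωp G ^ 2 + ferrariS G * ωp G + (ferrariS G * (1 / 2 - ferrariU G)) ^ 2 = 0 := by
  have hu := ferrariU_pos hG
  have hu' := ferrariU_lt_half hG
  have sqrt_sq : √(ferrariU G * (1 - ferrariU G)) ^ 2 = ferrariU G * (1 - ferrariU G) :=
    Real.sq_sqrt (mul_nonneg hu.le (by linarith))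
  rw [ωp_eq hG]
  linear_combination ferrariS G ^ 2 * sqrt_sq

theorem P_ωp {G : ℝ} (hG : 0 < G) : P G (ωp G) = 0 := by
  rw [P_eq_mul hG, ωp_quadratic hG, zero_mul]

theorem ωp_sq_lt {G : ℝ} (hG : 0 < G) : ωp G ^ 2 < G := by
  have hs := ferrariS_pos hG
  have hu := ferrariU_pos hG
  have hu' := ferrariU_lt_half hG
  have neg_ωp_lt : -ωp G < ferrariS G * (1 / 2 - ferrariU G) := by
    have u_lt_sqrt : ferrariU G < √(ferrariU G * (1 - ferrariU G)) := by
      rw [Real.lt_sqrt hu.le]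
      nlinarith
    rw [ωp_eq hG, neg_neg]
    gcongr
  calc ωp G ^ 2 = (-ωp G) ^ 2 := (neg_sq _).symm
    _ < (ferrariS G * (1 / 2 - ferrariU G)) ^ 2 :=
      pow_lt_pow_left₀ neg_ωp_lt (neg_pos.2 (ωp_neg hG)).le two_ne_zero
    _ = ferrariS G ^ 2 * ((1 / 2 - ferrariU G) * (1 / 2 - ferrariU G)) := by ring
    _ < ferrariS G ^ 2 * ((1 / 2 - ferrariU G) * (1 / 2 + ferrariU G)) := by
      have := sub_pos.2 hu'
      gcongr
      linarith
    _ = G := by linear_combination -eq_ferrariS_sq_mul hG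

end Ferrari

section RationalParametrization

/-- The `G`-coordinate of the rational parametrization `ω = (1 - r²)/2`, `G = (r - 1)(r + 1)³/4` of
the curve `P G ω = 0`; the values `r > 1` trace the branch `-√G < ω < 0`. -/
noncomputable def curveG (r : ℝ) : ℝ :=
  (r - 1) * (r + 1) ^ 3 / 4

/-- The parameter `r` of the point `(G, ω̃₊(G))` on the curve `P G ω = 0`. -/
noncomputable def curveParam (G : ℝ) : ℝ :=
  √(1 - 2 * ωp G)

theorem strictMonoOn_curveG : StrictMonoOn curveG (Set.Ici 1) := by
  intro x hx y _ hxy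
  have hx' : 0 ≤ x - 1 := sub_nonneg.2 hx
  have hy : 0 < y + 1 := by linarith
  unfold curveG
  calc (x - 1) * (x + 1) ^ 3 / 4 ≤ (x - 1) * (y + 1) ^ 3 / 4 := by
        have : 0 ≤ x + 1 := by linarith
        gcongr
    _ < (y - 1) * (y + 1) ^ 3 / 4 := by gcongr

theorem curveG_sqrt_of_P_eq_zero {G k : ℝ} (hk : k < 0) (hkG : k ^ 2 < G) (hP : P G k = 0) :
    curveG √(1 - 2 * k) = G := by
  set r := √(1 - 2 * k)
  have r_sq : r ^ 2 = 1 - 2 * k := Real.sq_sqrt (by linarith)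
  have factored : (G - k ^ 2 + k + k * r) * (G - k ^ 2 + k - k * r) = 0 := by
    unfold P at hP
    linear_combination hP - k ^ 2 * r_sq
  have r_gt_one : 1 < r := Real.lt_sqrt_of_sq_lt (by linarith)
  have second_pos : 0 < G - k ^ 2 + k - k * r := by
    nlinarith [mul_pos (neg_pos.2 hk) (sub_pos.2 r_gt_one)]
  have G_eq := (mul_eq_zero.1 factored).resolve_right second_pos.ne'
  have k_eq : k = (1 - r ^ 2) / 2 := by linarith
  rw [k_eq] at G_eq
  unfold curveG
  linear_combination -G_eq

theorem one_lt_curveParam {G : ℝ} (hG : 0 < G) : 1 < curveParam G :=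
  Real.lt_sqrt_of_sq_lt (by linarith [ωp_neg hG])

theorem ωp_eq_curveParam {G : ℝ} (hG : 0 < G) : ωp G = (1 - curveParam G ^ 2) / 2 := by
  rw [curveParam, Real.sq_sqrt (by linarith [ωp_neg hG])]
  ring

theorem curveG_curveParam {G : ℝ} (hG : 0 < G) : curveG (curveParam G) = G :=
  curveG_sqrt_of_P_eq_zero (ωp_neg hG) (ωp_sq_lt hG) (P_ωp hG)

theorem curveParam_curveG {r : ℝ} (hr : 1 < r) : curveParam (curveG r) = r := by
  have curveG_pos : 0 < curveG r := by
    have := sub_pos.2 hr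
    unfold curveG
    positivity
  exact strictMonoOn_curveG.injOn (one_lt_curveParam curveG_pos).le hr.le
    (curveG_curveParam curveG_pos)

theorem strictMonoOn_curveParam : StrictMonoOn curveParam (Set.Ioi 0) := by
  intro G hG H hH hGH
  rwa [← strictMonoOn_curveG.lt_iff_lt (one_lt_curveParam hG).le (one_lt_curveParam hH).le,
    curveG_curveParam hG, curveG_curveParam hH]

end RationalParametrization

section FocusingCondition

/-- The critical value `V_* = 9(3√3 - 5)/16` in closed form, obtained by solving
`(3/4)(r - 1)² = 1` for `r > 1` and setting `V_* = 1 / curveG r`. -/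
noncomputable def criticalV : ℝ :=
  9 * (3 * √3 - 5) / 16

theorem fV_eq_curveParam {V : ℝ} (hV : 0 < V) :
    fV V = 3 / 4 * (curveParam (1 / V) - 1) ^ 2 - 1 := by
  have hG := one_div_pos.2 hV
  have V_mul_curveG : V * curveG (curveParam (1 / V)) = 1 := by
    rw [curveG_curveParam hG, mul_one_div_cancel hV.ne']
  rw [fV, ωp_eq_curveParam hG]
  unfold curveG at V_mul_curveG
  linear_combination 3 / 4 * (curveParam (1 / V) - 1) ^ 2 * V_mul_curveG

theorem strictAntiOn_fV : StrictAntiOn fV (Set.Ioi 0) := by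
  intro V hV W hW hVW
  have inv_V_pos : 0 < 1 / V := one_div_pos.2 hV
  have inv_W_pos : 0 < 1 / W := one_div_pos.2 hW
  have param_pos : 0 < curveParam (1 / W) - 1 := sub_pos.2 (one_lt_curveParam inv_W_pos)
  have param_lt : curveParam (1 / W) < curveParam (1 / V) :=
    strictMonoOn_curveParam inv_W_pos inv_V_pos (one_div_lt_one_div_of_lt hV hVW)
  rw [fV_eq_curveParam hV, fV_eq_curveParam hW]
  gcongr

theorem criticalV_mem_Icc : criticalV ∈ Set.Icc (0.110335 : ℝ) 0.110336 := by
  have lt_sqrt : (1.7320504 : ℝ) < √3 := Real.lt_sqrt_of_sq_lt (by norm_num)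
  have sqrt_lt : √3 < (1.7320509 : ℝ) := (Real.sqrt_lt' (by norm_num)).2 (by norm_num)
  unfold criticalV
  constructor <;> linarith

theorem criticalV_pos : 0 < criticalV :=
  lt_of_lt_of_le (by norm_num) criticalV_mem_Icc.1

theorem one_div_criticalV : 1 / criticalV = curveG (1 + 2 / √3) := by
  have sqrt_three_sq : √3 ^ 2 = (3 : ℝ) := Real.sq_sqrt (by norm_num)
  have curveG_eq : curveG (1 + 2 / √3) = 40 / 9 + 8 * √3 / 3 := by
    have inv_eq : 2 / √3 = 2 * √3 / 3 := by
      field_simp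
      linear_combination -sqrt_three_sq
    rw [inv_eq, curveG]
    linear_combination (4 / 81 * √3 ^ 2 + 4 / 9 * √3 + 40 / 27) * sqrt_three_sq
  rw [curveG_eq, div_eq_iff criticalV_pos.ne', criticalV]
  linear_combination -(9 / 2 : ℝ) * sqrt_three_sq

theorem fV_criticalV : fV criticalV = 0 := by
  rw [fV_eq_curveParam criticalV_pos, one_div_criticalV,
    curveParam_curveG (lt_add_of_pos_right 1 (by positivity)), add_sub_cancel_left, div_pow,
    Real.sq_sqrt (by norm_num)]
  norm_num

end FocusingCondition

/-- There is exactly one root V_* of f in [10⁻⁶,10⁶]; it lies in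
[0.110335, 0.110336], f(V)>0 for 0<V<V_*, and f(V)<0 for V>V_*. -/
theorem critical_value_Vstar :
    ∃ Vstar : ℝ,
      Vstar ∈ Set.Icc (1 / 10 ^ 6 : ℝ) ((10 : ℝ) ^ 6) ∧ fV Vstar = 0 ∧
      (∀ V ∈ Set.Icc (1 / 10 ^ 6 : ℝ) ((10 : ℝ) ^ 6), fV V = 0 → V = Vstar) ∧
      Vstar ∈ Set.Icc (0.110335 : ℝ) (0.110336 : ℝ) ∧
      (∀ V : ℝ, 0 < V → V < Vstar → 0 < fV V) ∧
      (∀ V : ℝ, Vstar < V → fV V < 0) := by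
  have hpos := criticalV_pos
  obtain ⟨hlower, hupper⟩ := criticalV_mem_Icc
  refine ⟨criticalV, ⟨?_, ?_⟩, fV_criticalV, ?_, ⟨hlower, hupper⟩, ?_, ?_⟩
  · exact le_trans (by norm_num) hlower
  · exact hupper.trans (by norm_num)
  · intro V hV hzero
    have hVpos : 0 < V := lt_of_lt_of_le (by norm_num) hV.1
    exact strictAntiOn_fV.injOn hVpos hpos (hzero.trans fV_criticalV.symm)
  · intro V hV hlt
    simpa only [fV_criticalV] using strictAntiOn_fV hV hpos hlt
  · intro V hlt
    simpa only [fV_criticalV] using strictAntiOn_fV hpos (hpos.trans hlt) hlt
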